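/- Fix α > 0 and β > 0, and let ν be an eigen-measure for (α,β) with exponent P. Then ν([0]) = e^{−β/2}·F(P,β)·ν([0*₀]) and ν([1]) = e^{−3β/2}·F(P,3β)·ν([1*₁]). -/

import Mathlib

/-!
The indicator `f` of a clopen set `S ⊆ [a]` is continuous, so the eigen-measure identity applies
to it and reads `e^P ν(S) = ∫ e^{β A(a·x)} 1_S(a·x) dν(x)`. Let `a ∈ {0, 1}` and write
`A(x) = -c d(x, a^∞)` on `[a]`, with `c = 1` for `a = 0` and `c = 3` for `a = 1`.

* With `S = [a^{n+1}*_a]` the weight is constant on the relevant set, and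
  `e^P ν([a^{n+1}*_a]) = e^{-cβ/2^{n+1}} ν([a^n*_a])`. Iterating gives
  `ν([a^{k+1}*_a]) = e^{-cβ/2} e^{-kP} e^{cβ/2^{k+1}} ν([a*_a])`
  (`IsEigenMeasure.ringSet_eq`).
* With `S = [a^{n+1}]` the weight is at most `1`, so `e^P ν([a^{n+1}]) ≤ ν([a^n])`, and `P > 0`
  forces `ν([a^n]) → 0` (`IsEigenMeasure.tendsto_constCyl`).

Since `[a] = [a*_a] ⊔ ⋯ ⊔ [a^n*_a] ⊔ [a^{n+1}]`, letting `n → ∞` gives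
`ν([a]) = ∑_k ν([a^{k+1}*_a])`, which is the claimed formula (`IsEigenMeasure.cyl_eq`).
-/

open MeasureTheory Filter Topology

noncomputable section

/-- The full shift space `Σ = {0,1,2}^ℕ`. -/
abbrev Sig : Type := ℕ → Fin 3

/-- The shift map `σ`. -/
def shift (x : Sig) : Sig := fun n => x (n + 1)

/-- The fixed point `0^∞`. -/
def zeroSeq : Sig := fun _ => 0

/-- The fixed point `1^∞`. -/
def oneSeq : Sig := fun _ => 1

/-- Prepending a symbol: `a·x = (a, x₀, x₁, …)`. -/
def cons (a : Fin 3) (x : Sig) : Sig := fun n => Nat.casesOn n a x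

open Classical in
/-- The metric `d(x,y) = (1/2)^(min{n : x n ≠ y n})`, with `d(x,x) = 0`. -/
def dist3 (x y : Sig) : ℝ :=
  if h : x ≠ y then (1 / 2 : ℝ) ^ Nat.find (Function.ne_iff.mp h) else 0

/-- The potential `A_α`. -/
def pot (α : ℝ) (x : Sig) : ℝ :=
  if x 0 = 0 then -dist3 x zeroSeq
  else if x 0 = 1 then -(3 * dist3 x oneSeq)
  else -α

/-- The transfer operator `L_β` (for parameter `α`). -/
def transfer (α β : ℝ) (f : Sig → ℝ) : Sig → ℝ :=
  fun x => ∑ a : Fin 3, Real.exp (β * pot α (cons a x)) * f (cons a x)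

/-- The ring `[a^n *_a] = {x : x_i = a for i < n, x_n ≠ a}`. -/
def ringSet (a : Fin 3) (n : ℕ) : Set Sig := {x | (∀ i < n, x i = a) ∧ x n ≠ a}

/-- The cylinder `[a] = {x : x₀ = a}`. -/
def cyl (a : Fin 3) : Set Sig := {x | x 0 = a}

/-- `H` is locally ring-constant: constant on `[2]` and on each ring `[0^m*₀]`, `[1^m*₁]`. -/
def LocallyRingConstant (H : Sig → ℝ) : Prop :=
  (∀ x ∈ cyl 2, ∀ y ∈ cyl 2, H x = H y) ∧
  (∀ m : ℕ, 1 ≤ m → ∀ x ∈ ringSet 0 m, ∀ y ∈ ringSet 0 m, H x = H y) ∧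
  (∀ m : ℕ, 1 ≤ m → ∀ x ∈ ringSet 1 m, ∀ y ∈ ringSet 1 m, H x = H y)

/-- An eigen-measure for `(α,β)` with exponent `P`:  a Borel probability measure `ν`
with `P > 0` and `∫ L_β f dν = e^P ∫ f dν` for every continuous `f`. -/
structure IsEigenMeasure (α β P : ℝ) (ν : Measure Sig) : Prop where
  P_pos : 0 < P
  prob : IsProbabilityMeasure ν
  eigenMeas : ∀ f : Sig → ℝ, Continuous f →
    ∫ x, transfer α β f x ∂ν = Real.exp P * ∫ x, f x ∂ν

/-- Eigen-data `(P, H, ν)` for `(α,β)`. -/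
structure IsEigenData (α β P : ℝ) (H : Sig → ℝ) (ν : Measure Sig) : Prop where
  P_pos : 0 < P
  H_cont : Continuous H
  H_pos : ∀ x, 0 < H x
  eigenFun : ∀ x, transfer α β H x = Real.exp P * H x
  prob : IsProbabilityMeasure ν
  eigenMeas : ∀ f : Sig → ℝ, Continuous f →
    ∫ x, transfer α β f x ∂ν = Real.exp P * ∫ x, f x ∂ν

/-- The Gibbs measure `μ(B) = (∫_B H dν)/(∫ H dν)`. -/
def gibbs (H : Sig → ℝ) (ν : Measure Sig) : Measure Sig :=
  (ν.withDensity (fun x => ENNReal.ofReal (H x)) Set.univ)⁻¹ •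
    ν.withDensity (fun x => ENNReal.ofReal (H x))

/-- Weak convergence (as `β → +∞`) of a family of measures to a measure `μ∞`:
convergence of integrals of every bounded continuous function. -/
def WeakLimit (μ : ℝ → Measure Sig) (μlim : Measure Sig) : Prop :=
  ∀ f : Sig → ℝ, Continuous f → (∃ C : ℝ, ∀ x, |f x| ≤ C) →
    Tendsto (fun β => ∫ x, f x ∂(μ β)) atTop (nhds (∫ x, f x ∂μlim))

/-- `F(Z,β) = Σ_{k=0}^∞ e^{−kZ}·e^{β/2^{k+1}}`. -/
def Ffun (Z β : ℝ) : ℝ := ∑' k : ℕ, Real.exp (-(k : ℝ) * Z) * Real.exp (β / 2 ^ (k + 1))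

/-- `Fpartial Z β m = F_{m-1}(Z,β) = Σ_{k=0}^{m-1} e^{−kZ}·e^{β/2^{k+1}}` (so `Fpartial Z β 0 = F_{-1} = 0`). -/
def Fpartial (Z β : ℝ) (m : ℕ) : ℝ :=
  ∑ k ∈ Finset.range m, Real.exp (-(k : ℝ) * Z) * Real.exp (β / 2 ^ (k + 1))

/-- The cylinder `[a^n] = {x : x_i = a for i < n}`. -/
def constCyl (a : Fin 3) (n : ℕ) : Set Sig := {x | ∀ i < n, x i = a}

lemma isClopen_constCyl (a : Fin 3) (n : ℕ) : IsClopen (constCyl a n) := by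
  have h : constCyl a n = ⋂ i ∈ Finset.range n, (fun x : Sig => x i) ⁻¹' {a} := by
    ext x
    simp [constCyl]
  rw [h]
  exact isClopen_biInter_finset fun i _ => (isClopen_discrete _).preimage (continuous_apply i)

lemma ringSet_eq_diff (a : Fin 3) (n : ℕ) :
    ringSet a n = constCyl a n \ constCyl a (n + 1) := by
  ext x
  simp only [ringSet, constCyl, Set.mem_ofPred_eq, Set.mem_sdiff, Nat.lt_succ_iff_lt_or_eq]
  constructor
  · rintro ⟨h1, h2⟩
    exact ⟨h1, fun h => h2 (h n (Or.inr rfl))⟩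
  · rintro ⟨h1, h2⟩
    refine ⟨h1, fun h => h2 ?_⟩
    rintro i (hi | rfl)
    · exact h1 i hi
    · exact h

lemma isClopen_ringSet (a : Fin 3) (n : ℕ) : IsClopen (ringSet a n) := by
  rw [ringSet_eq_diff]
  exact (isClopen_constCyl a n).diff (isClopen_constCyl a (n + 1))

lemma cons_mem_constCyl (a : Fin 3) (n : ℕ) (x : Sig) :
    cons a x ∈ constCyl a (n + 1) ↔ x ∈ constCyl a n := by
  constructor
  · intro h i hi
    exact h (i + 1) (by omega)
  · rintro h (_ | i) hi
    · rfl
    · exact h i (by omega)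

lemma cons_mem_ringSet (a : Fin 3) (n : ℕ) (x : Sig) :
    cons a x ∈ ringSet a (n + 1) ↔ x ∈ ringSet a n := by
  simp only [ringSet_eq_diff, Set.mem_sdiff, cons_mem_constCyl]

lemma dist3_nonneg (x y : Sig) : 0 ≤ dist3 x y := by
  unfold dist3
  split_ifs <;> positivity

lemma dist3_of_mem_ringSet {a : Fin 3} {n : ℕ} {x : Sig} (hx : x ∈ ringSet a n) :
    dist3 x (fun _ => a) = (1 / 2 : ℝ) ^ n := by
  have hne : x ≠ fun _ => a := fun h => hx.2 (congrFun h n)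
  unfold dist3
  rw [dif_pos hne]
  congr 1
  rw [Nat.find_eq_iff]
  exact ⟨hx.2, fun m hm => not_not.mpr (hx.1 m hm)⟩

/-- For a set `S ⊆ [a]`, only the branch `x ↦ a·x` of the transfer operator sees `S`. -/
lemma transfer_indicator (α β : ℝ) {a : Fin 3} {S : Set Sig} (hS : S ⊆ cyl a) (x : Sig) :
    transfer α β (S.indicator 1) x
      = Real.exp (β * pot α (cons a x)) * S.indicator 1 (cons a x) := by
  unfold transfer
  refine Finset.sum_eq_single_of_mem a (Finset.mem_univ a) fun b _ hb => ?_
  have : cons b x ∉ S := fun h => hb (hS h)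
  rw [Set.indicator_of_notMem this, mul_zero]

lemma IsEigenMeasure.integral_indicator {α β P : ℝ} {ν : Measure Sig}
    (hν : IsEigenMeasure α β P ν) {a : Fin 3} {S : Set Sig} (hS : S ⊆ cyl a) (hc : IsClopen S) :
    ∫ x, Real.exp (β * pot α (cons a x)) * S.indicator 1 (cons a x) ∂ν
      = Real.exp P * ν.real S := by
  have h := hν.eigenMeas (S.indicator 1)
    (continuous_one.indicator fun x hx => by simp [hc.frontier_eq] at hx)
  rw [integral_indicator_one hc.isOpen.measurableSet] at h
  rw [← h]
  simp only [transfer_indicator α β hS]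

/-- One step down the rings: on `[a^n*_a]` the weight of the branch `x ↦ a·x` is the constant
`e^{-γ/2^{n+1}}`, where `γ = cβ`. -/
lemma IsEigenMeasure.ringSet_succ {α β P c : ℝ} {ν : Measure Sig}
    (hν : IsEigenMeasure α β P ν) {a : Fin 3}
    (hpot : ∀ x : Sig, x 0 = a → pot α x = -(c * dist3 x (fun _ => a))) (n : ℕ) :
    Real.exp P * ν.real (ringSet a (n + 1))
      = Real.exp (-(c * β / 2 ^ (n + 1))) * ν.real (ringSet a n) := by
  have := hν.prob
  rw [← hν.integral_indicator (a := a) (S := ringSet a (n + 1))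
      (fun x hx => hx.1 0 n.succ_pos) (isClopen_ringSet a (n + 1)),
    ← integral_indicator_one (isClopen_ringSet a n).isOpen.measurableSet, ← integral_const_mul]
  refine integral_congr_ae (Filter.Eventually.of_forall fun x => ?_)
  by_cases hx : x ∈ ringSet a n
  · have hx' := (cons_mem_ringSet a n x).2 hx
    simp only [Set.indicator_of_mem hx, Set.indicator_of_mem hx']
    rw [hpot _ rfl, dist3_of_mem_ringSet hx', one_div, inv_pow]
    congr 2
    ring
  · have hx' := mt (cons_mem_ringSet a n x).1 hx
    simp only [Set.indicator_of_notMem hx, Set.indicator_of_notMem hx', mul_zero]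

lemma IsEigenMeasure.constCyl_succ_le {α β P c : ℝ} {ν : Measure Sig}
    (hν : IsEigenMeasure α β P ν) (hβ : 0 ≤ β) (hc : 0 ≤ c) {a : Fin 3}
    (hpot : ∀ x : Sig, x 0 = a → pot α x = -(c * dist3 x (fun _ => a))) (n : ℕ) :
    Real.exp P * ν.real (constCyl a (n + 1)) ≤ ν.real (constCyl a n) := by
  have := hν.prob
  rw [← hν.integral_indicator (a := a) (S := constCyl a (n + 1))
      (fun x hx => hx 0 n.succ_pos) (isClopen_constCyl a (n + 1)),
    ← integral_indicator_one (isClopen_constCyl a n).isOpen.measurableSet]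
  refine integral_mono_of_nonneg (Filter.Eventually.of_forall fun x => ?_)
    ((integrable_const (1 : ℝ)).indicator (isClopen_constCyl a n).isOpen.measurableSet)
    (Filter.Eventually.of_forall fun x => ?_)
  · exact mul_nonneg (Real.exp_pos _).le (Set.indicator_nonneg (fun _ _ => zero_le_one) _)
  · by_cases hx : x ∈ constCyl a n
    · have hx' := (cons_mem_constCyl a n x).2 hx
      simp only [Set.indicator_of_mem hx, Set.indicator_of_mem hx', Pi.one_apply, mul_one]
      rw [hpot _ rfl, Real.exp_le_one_iff]
      have := mul_nonneg hβ (mul_nonneg hc (dist3_nonneg (cons a x) (fun _ => a)))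
      linarith
    · have hx' := mt (cons_mem_constCyl a n x).1 hx
      simp only [Set.indicator_of_notMem hx, Set.indicator_of_notMem hx', mul_zero, le_refl]

/-- The fixed point `a^∞` carries no mass, since `ν([a^n]) ≤ e^{-nP}`; this is where `P > 0`
enters. -/
lemma IsEigenMeasure.tendsto_constCyl {α β P c : ℝ} {ν : Measure Sig}
    (hν : IsEigenMeasure α β P ν) (hβ : 0 ≤ β) (hc : 0 ≤ c) {a : Fin 3}
    (hpot : ∀ x : Sig, x 0 = a → pot α x = -(c * dist3 x (fun _ => a))) :
    Tendsto (fun n => ν.real (constCyl a n)) atTop (𝓝 0) := by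
  have := hν.prob
  have hle : ∀ n, ν.real (constCyl a n) ≤ Real.exp (-P) ^ n := by
    intro n
    induction n with
    | zero => simp
    | succ n ih =>
      have h := (hν.constCyl_succ_le hβ hc hpot n).trans ih
      have h2 := mul_le_mul_of_nonneg_left h (Real.exp_pos (-P)).le
      rwa [← mul_assoc, ← Real.exp_add, neg_add_cancel, Real.exp_zero, one_mul, mul_comm,
        ← pow_succ] at h2
  refine squeeze_zero (fun n => measureReal_nonneg) hle
    (tendsto_pow_atTop_nhds_zero_of_lt_one (Real.exp_pos _).le ?_)
  rw [Real.exp_lt_one_iff]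
  linarith [hν.P_pos]

/-- Iterating `IsEigenMeasure.ringSet_succ`, with `1/4 + ⋯ + 1/2^{k+1} = 1/2 - 1/2^{k+1}`. -/
lemma IsEigenMeasure.ringSet_eq {α β P c : ℝ} {ν : Measure Sig}
    (hν : IsEigenMeasure α β P ν) {a : Fin 3}
    (hpot : ∀ x : Sig, x 0 = a → pot α x = -(c * dist3 x (fun _ => a))) (k : ℕ) :
    ν.real (ringSet a (k + 1)) = Real.exp (-(c * β / 2)) *
      (Real.exp (-(k : ℝ) * P) * Real.exp (c * β / 2 ^ (k + 1))) * ν.real (ringSet a 1) := by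
  induction k with
  | zero => simp [← Real.exp_add]
  | succ k ih =>
    have h := hν.ringSet_succ hpot (k + 1)
    rw [ih] at h
    refine mul_left_cancel₀ (Real.exp_pos P).ne' (h.trans ?_)
    simp only [← mul_assoc, ← Real.exp_add]
    congr 2
    push_cast
    field_simp
    ring

/-- The cylinder formula for either symbol: `[a]` is the disjoint union of the rings
`[a^{k+1}*_a]` and the null set `{a^∞}`. -/
lemma IsEigenMeasure.cyl_eq {α β P c : ℝ} {ν : Measure Sig}
    (hν : IsEigenMeasure α β P ν) (hβ : 0 ≤ β) (hc : 0 ≤ c) {a : Fin 3}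
    (hpot : ∀ x : Sig, x 0 = a → pot α x = -(c * dist3 x (fun _ => a))) :
    ν (cyl a)
      = ENNReal.ofReal (Real.exp (-(c * β / 2)) * Ffun P (c * β)) * ν (ringSet a 1) := by
  have := hν.prob
  have hcyl : cyl a = constCyl a 1 := by
    ext x
    simp [cyl, constCyl]
  have hring : ∀ n, ν.real (ringSet a n)
      = ν.real (constCyl a n) - ν.real (constCyl a (n + 1)) := by
    intro n
    rw [ringSet_eq_diff]
    exact measureReal_sdiff (fun x hx i hi => hx i (by omega))
      (isClopen_constCyl a (n + 1)).isOpen.measurableSet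
  have hsum : HasSum (fun k => ν.real (ringSet a (k + 1))) (ν.real (cyl a)) := by
    rw [hasSum_iff_tendsto_nat_of_nonneg fun k => measureReal_nonneg]
    have hpart : ∀ n, ∑ k ∈ Finset.range n, ν.real (ringSet a (k + 1))
        = ν.real (cyl a) - ν.real (constCyl a (n + 1)) := by
      intro n
      simp only [hring, hcyl]
      exact Finset.sum_range_sub' (fun k => ν.real (constCyl a (k + 1))) n
    simp only [hpart]
    simpa using ((tendsto_add_atTop_iff_nat 1).2
      (hν.tendsto_constCyl hβ hc hpot)).const_sub (ν.real (cyl a))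
  have hreal : ν.real (cyl a)
      = Real.exp (-(c * β / 2)) * Ffun P (c * β) * ν.real (ringSet a 1) := by
    rw [← hsum.tsum_eq, tsum_congr (hν.ringSet_eq hpot), tsum_mul_right,
      tsum_mul_left, Ffun]
  have hF : 0 ≤ Real.exp (-(c * β / 2)) * Ffun P (c * β) :=
    mul_nonneg (Real.exp_pos _).le (tsum_nonneg fun k => by positivity)
  rw [← ofReal_measureReal (μ := ν) (s := cyl a), hreal, ENNReal.ofReal_mul hF,
    ofReal_measureReal]

/-- Values of the eigen-measure on the cylinders `[0]` and `[1]`: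
`ν[0] = e^{−β/2} F(P,β) ν[0*₀]` and `ν[1] = e^{−3β/2} F(P,3β) ν[1*₁]`. -/
theorem eigenMeasure_cylinder_formula (α β : ℝ) (hα : 0 < α) (hβ : 0 < β)
    (P : ℝ) (ν : Measure Sig) (hν : IsEigenMeasure α β P ν) :
    ν (cyl 0) = ENNReal.ofReal (Real.exp (-(β / 2)) * Ffun P β) * ν (ringSet 0 1) ∧
    ν (cyl 1) = ENNReal.ofReal (Real.exp (-(3 * β / 2)) * Ffun P (3 * β)) * ν (ringSet 1 1) := by
  constructor
  · have h := hν.cyl_eq (c := 1) (a := 0) hβ.le zero_le_one fun x hx => by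
      rw [pot, if_pos hx, one_mul]
      rfl
    rwa [one_mul] at h
  · refine hν.cyl_eq (c := 3) (a := 1) hβ.le (by norm_num) fun x hx => ?_
    rw [pot, if_neg (by simp [hx]), if_pos hx]
    rfl


end
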